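/- arXiv:2603.10908 — 9 statements merged into one kernel-verified Lean document; each statement's English description precedes it below -/
import Mathlib

section
/- Let α be a Boolean algebra such that (i) every countable subset of α has a least upper bound in α, and (ii) every subset of α consisting of pairwise disjoint elements different from ⊥ (i.e., a ⊓ b = ⊥ for distinct members, and ⊥ is not a member) is countable. Then every subset s of α has a least upper bound in α (∀ s : Set α, ∃ b, IsLUB s b). -/
/-!
By Zorn's lemma there is a maximal family `m` of pairwise disjoint nonzero elements, each lying
below some member of `s`. The chain condition makes `m` countable, so it has a least upper
bound `b`. Every upper bound of `s` bounds `m`, hence lies above `b`. Conversely `b` bounds `s`: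
if `x ∈ s` and `x \ b ≠ ⊥`, then `x \ b` is disjoint from every member of `m` and could be added
to `m`, contradicting maximality.
-/

/-- A σ-complete Boolean algebra satisfying the countable chain condition is
complete: every subset has a least upper bound. -/
theorem complete_of_sigmaComplete_ccc {α : Type*} [BooleanAlgebra α]
    (hσ : ∀ s : Set α, s.Countable → ∃ b, IsLUB s b)
    (hccc : ∀ s : Set α, ⊥ ∉ s →
      (∀ a ∈ s, ∀ b ∈ s, a ≠ b → a ⊓ b = ⊥) → s.Countable) :
    ∀ s : Set α, ∃ b, IsLUB s b := by
  intro s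
  obtain ⟨m, hm⟩ := zorn_subset
    {t : Set α | (∀ a ∈ t, a ≠ ⊥ ∧ ∃ x ∈ s, a ≤ x) ∧
      ∀ a ∈ t, ∀ b ∈ t, a ≠ b → a ⊓ b = ⊥} (by
    intro c hcS hc
    refine ⟨⋃₀ c, ⟨?_, ?_⟩, fun t ht => Set.subset_sUnion_of_mem ht⟩
    · rintro a ⟨t, ht, hat⟩
      exact (hcS ht).1 a hat
    · rintro a ⟨t, ht, hat⟩ b ⟨t', ht', hbt'⟩ hab
      rcases hc.total ht ht' with h | h
      · exact (hcS ht').2 a (h hat) b hbt' hab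
      · exact (hcS ht).2 a hat b (h hbt') hab)
  obtain ⟨hbelow, hdisj⟩ := hm.prop
  obtain ⟨b, hb⟩ := hσ m (hccc m (fun h => (hbelow ⊥ h).1 rfl) hdisj)
  refine ⟨b, fun x hx => ?_, fun u hu => hb.2 fun a ha => ?_⟩
  · by_contra hxb
    have hne : x \ b ≠ ⊥ := fun h => hxb (sdiff_eq_bot_iff.mp h)
    have hd : ∀ a ∈ m, Disjoint (x \ b) a := fun a ha =>
      disjoint_sdiff_self_left.mono_right (hb.1 ha)
    have hmem : x \ b ∈ m := by
      refine hm.le_of_ge (y := insert (x \ b) m) ⟨?_, ?_⟩ (Set.subset_insert _ _)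
        (Set.mem_insert _ _)
      · rintro a (rfl | ha)
        · exact ⟨hne, x, hx, sdiff_le⟩
        · exact hbelow a ha
      · rintro a (rfl | ha) a' (rfl | ha') haa'
        · exact absurd rfl haa'
        · exact (hd a' ha').eq_bot
        · exact (hd a ha).symm.eq_bot
        · exact hdisj a ha a' ha' haa'
    exact hne (disjoint_self.mp (hd _ hmem))
  · obtain ⟨-, x, hx, hax⟩ := hbelow a ha
    exact hax.trans (hu hx)
end

section
/- There exists a Borel (measurable) set C ⊆ [0,1] of positive Lebesgue measure such that for all real numbers r, s with 0 ≤ r < s ≤ 1, the Lebesgue measure of C ∩ [r,s] is strictly positive and strictly smaller than s − r. -/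
open MeasureTheory

/-!
Take open intervals `V n` of radius `4⁻ⁿ` such that every nontrivial interval contains some pair
`V (2k)`, `V (2k+1)`. Since `∑_{m > n} |V m| < |V n|`, the set `E n` of points of `V n` lying in no
later `V m` has positive measure (`volume_lastHit_pos`), and the sets `E n` are pairwise disjoint.
Hence `C = [0,1] ∩ ⋃ₖ E (2k)` works: an interval containing `V (2k)` and `V (2k+1)` meets `C` in at
least `E (2k)` and misses `C` on at least `E (2k+1)`, both of positive measure.
-/

namespace FatNowhereFull

/-- The open interval of radius `4⁻ⁿ` centred at the point `d a` of a dense sequence, where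
`n / 2` codes a pair `(a, j)`. Every centre thus recurs with arbitrarily small radii, and `2k` and
`2k + 1` share their centre. -/
noncomputable def V (n : ℕ) : Set ℝ :=
  Metric.ball (TopologicalSpace.denseSeq ℝ (Nat.unpair (n / 2)).1) ((1 / 4 : ℝ) ^ n)

/-- The points whose last visit to the sequence `V` is at index `n`. -/
noncomputable def lastHit (n : ℕ) : Set ℝ := V n \ ⋃ m : ℕ, V (n + 1 + m)

lemma measurableSet_lastHit (n : ℕ) : MeasurableSet (lastHit n) :=
  Metric.isOpen_ball.measurableSet.diff
    (MeasurableSet.iUnion fun _ => Metric.isOpen_ball.measurableSet)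

lemma volume_V (n : ℕ) : volume (V n) = ENNReal.ofReal (2 * (1 / 4 : ℝ) ^ n) := by
  rw [V, Real.volume_ball]

lemma volume_lastHit_pos (n : ℕ) : 0 < volume (lastHit n) := by
  have hs : HasSum (fun m : ℕ => 2 * (1 / 4 : ℝ) ^ (n + 1 + m))
      (2 * (1 / 4 : ℝ) ^ (n + 1) * (1 - 1 / 4)⁻¹) := by
    have h := (hasSum_geometric_of_lt_one (r := (1 / 4 : ℝ)) (by norm_num)
      (by norm_num)).mul_left (2 * (1 / 4 : ℝ) ^ (n + 1))
    simpa only [pow_add, mul_assoc] using h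
  have htail : volume (⋃ m : ℕ, V (n + 1 + m)) < volume (V n) := by
    refine (measure_iUnion_le _).trans_lt ?_
    simp only [volume_V]
    rw [← ENNReal.ofReal_tsum_of_nonneg (fun m => by positivity) hs.summable, hs.tsum_eq]
    have hp : (0 : ℝ) < (1 / 4) ^ n := by positivity
    refine (ENNReal.ofReal_lt_ofReal_iff (by positivity)).2 ?_
    rw [pow_succ]
    linarith
  exact (tsub_pos_of_lt htail).trans_le le_measure_sdiff

lemma disjoint_lastHit {m n : ℕ} (h : m < n) : Disjoint (lastHit m) (lastHit n) := by
  rw [Set.disjoint_left]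
  rintro x ⟨-, hm⟩ ⟨hn, -⟩
  refine hm (Set.mem_iUnion.2 ⟨n - (m + 1), ?_⟩)
  rwa [Nat.add_sub_cancel' h]

lemma exists_V_subset {r s : ℝ} (h : r < s) :
    ∃ k : ℕ, V (2 * k) ⊆ Set.Icc r s ∧ V (2 * k + 1) ⊆ Set.Icc r s := by
  obtain ⟨a, ha⟩ := (TopologicalSpace.denseRange_denseSeq ℝ).exists_mem_open isOpen_Ioo
    (Set.nonempty_Ioo.2 h)
  obtain ⟨ε, hε, hball⟩ := Metric.isOpen_iff.1 isOpen_Ioo _ ha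
  obtain ⟨j, hj⟩ := exists_pow_lt_of_lt_one hε (by norm_num : (1 / 4 : ℝ) < 1)
  have key : ∀ n, n / 2 = Nat.pair a j → V n ⊆ Set.Icc r s := by
    intro n hn
    have hjn : j ≤ n := (Nat.right_le_pair a j).trans (hn ▸ Nat.div_le_self n 2)
    have hr : (1 / 4 : ℝ) ^ n ≤ ε :=
      (pow_le_pow_of_le_one (by norm_num) (by norm_num) hjn).trans hj.le
    rw [V, hn, Nat.unpair_pair]
    exact (Metric.ball_subset_ball hr).trans (hball.trans Set.Ioo_subset_Icc_self)
  exact ⟨Nat.pair a j, key _ (by omega), key _ (by omega)⟩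

end FatNowhereFull

open FatNowhereFull

/-- There is a Borel set `C ⊆ [0,1]` of positive Lebesgue measure such that for
every nontrivial subinterval `[r,s]` of `[0,1]`, the measure of `C ∩ [r,s]` is
strictly positive and strictly smaller than `s - r`. -/
theorem exists_fat_nowhere_full_set :
    ∃ C : Set ℝ, MeasurableSet C ∧ C ⊆ Set.Icc 0 1 ∧ 0 < volume C ∧
      ∀ r s : ℝ, 0 ≤ r → r < s → s ≤ 1 →
        0 < volume (C ∩ Set.Icc r s) ∧
          volume (C ∩ Set.Icc r s) < ENNReal.ofReal (s - r) := by
  set C : Set ℝ := Set.Icc 0 1 ∩ ⋃ k : ℕ, lastHit (2 * k)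
  have hCm : MeasurableSet C :=
    measurableSet_Icc.inter (MeasurableSet.iUnion fun _ => measurableSet_lastHit _)
  have main : ∀ r s : ℝ, 0 ≤ r → r < s → s ≤ 1 → 0 < volume (C ∩ Set.Icc r s) ∧
      volume (C ∩ Set.Icc r s) < ENNReal.ofReal (s - r) := by
    intro r s hr hrs hs
    obtain ⟨k, heven, hodd⟩ := exists_V_subset hrs
    constructor
    · refine (volume_lastHit_pos (2 * k)).trans_le (measure_mono fun x hx => ?_)
      have hxI := heven hx.1
      exact ⟨⟨Set.Icc_subset_Icc hr hs hxI, Set.mem_iUnion.2 ⟨k, hx⟩⟩, hxI⟩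
    · have hpos : 0 < volume (Set.Icc r s \ C) := by
        refine (volume_lastHit_pos (2 * k + 1)).trans_le
          (measure_mono fun x hx => ⟨hodd hx.1, ?_⟩)
        rintro ⟨-, hx'⟩
        obtain ⟨i, hi⟩ := Set.mem_iUnion.1 hx'
        rcases lt_or_gt_of_ne (show 2 * i ≠ 2 * k + 1 by omega) with h | h
        · exact Set.disjoint_left.1 (disjoint_lastHit h) hi hx
        · exact Set.disjoint_left.1 (disjoint_lastHit h) hx hi
      have hfin : volume (Set.Icc r s ∩ C) ≠ ⊤ :=
        measure_ne_top_of_subset Set.inter_subset_left measure_Icc_lt_top.ne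
      rw [← Real.volume_Icc, ← measure_inter_add_sdiff (Set.Icc r s) hCm, Set.inter_comm C]
      exact ENNReal.lt_add_right hfin hpos.ne'
  exact ⟨C, hCm, Set.inter_subset_left,
    (main 0 1 le_rfl one_pos le_rfl).1.trans_le (measure_mono Set.inter_subset_left), main⟩
end

section
/- Let U be the hyperfilter on ℕ and let a, b be hypernatural germs (elements of Filter.Germ (U : Filter ℕ) ℕ) such that a + k < b for every standard k : ℕ (k viewed as a constant germ). Then the set {x : Filter.Germ (U : Filter ℕ) ℕ | a ≤ x ∧ x ≤ b} has cardinality equal to the continuum (Cardinal.continuum). -/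
open Filter

/-!
Upper bound: the ultrapower is a quotient of `ℕ → ℕ`, which has `ℵ₀ ^ ℵ₀ = 𝔠` elements.

Lower bound: write `a = [f]`, `b = [g]` and `d = g - f`, so that `d` exceeds every standard `k`
almost everywhere. For real `r ∈ [0, 1]` the germ of `f + ⌊r * d⌋` lies in `[a, b]`, and for
`r < s` the germs are distinct, because `⌊r * d⌋ < ⌊s * d⌋` as soon as `1 ≤ (s - r) * d`.
Hence `[0, 1]` injects into the interval.
-/

theorem floor_mul_lt_floor_mul {r s : ℝ} {k d : ℕ} (hr : 0 ≤ r) (hk : 1 ≤ (s - r) * k)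
    (hrs : r < s) (hd : k < d) : ⌊r * d⌋₊ < ⌊s * d⌋₊ := by
  have hkd : (k : ℝ) ≤ d := by exact_mod_cast hd.le
  have h1 : r * d + 1 ≤ s * d := by
    nlinarith [mul_le_mul_of_nonneg_left hkd (sub_pos.2 hrs).le]
  calc ⌊r * d⌋₊ < ⌊r * d⌋₊ + 1 := Nat.lt_succ_self _
    _ = ⌊r * d + 1⌋₊ := (Nat.floor_add_one (by positivity)).symm
    _ ≤ ⌊s * d⌋₊ := Nat.floor_le_floor h1

/-- In the ultrapower `ℕ^ℕ/U` over the hyperfilter, any interval `[a,b]` whose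
endpoints are at infinite distance has cardinality continuum. -/
theorem interval_of_infinite_distance_has_card_continuum
    (a b : Germ ((hyperfilter ℕ : Ultrafilter ℕ) : Filter ℕ) ℕ)
    (h : ∀ k : ℕ, a + (k : Germ ((hyperfilter ℕ : Ultrafilter ℕ) : Filter ℕ) ℕ) < b) :
    Cardinal.mk {x : Germ ((hyperfilter ℕ : Ultrafilter ℕ) : Filter ℕ) ℕ | a ≤ x ∧ x ≤ b}
      = Cardinal.continuum := by
  apply le_antisymm
  · refine (Cardinal.mk_set_le _).trans ?_
    have hq : Function.Surjective
        (fun f : ℕ → ℕ => (f : Germ ((hyperfilter ℕ : Ultrafilter ℕ) : Filter ℕ) ℕ)) :=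
      Quotient.mk_surjective
    refine (Cardinal.mk_le_of_surjective hq).trans ?_
    simp
  · induction a using Germ.inductionOn with | _ f
    induction b using Germ.inductionOn with | _ g
    have hd : ∀ k : ℕ, ∀ᶠ n in ((hyperfilter ℕ : Ultrafilter ℕ) : Filter ℕ), f n + k < g n :=
      fun k => Germ.coe_lt.1 (h k)
    rw [← Cardinal.mk_Icc_real (zero_lt_one' ℝ)]
    let F : ℝ → ℕ → ℕ := fun r n => f n + ⌊r * ((g n - f n : ℕ) : ℝ)⌋₊
    have hmem : ∀ r : Set.Icc (0 : ℝ) 1,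
        ((f : Germ ((hyperfilter ℕ : Ultrafilter ℕ) : Filter ℕ) ℕ) ≤ F r ∧
        (F r : Germ ((hyperfilter ℕ : Ultrafilter ℕ) : Filter ℕ) ℕ) ≤ g) := by
      rintro ⟨r, h0, h1⟩
      refine ⟨Germ.coe_le.2 (Eventually.of_forall fun n => Nat.le_add_right _ _),
        Germ.coe_le.2 ?_⟩
      filter_upwards [hd 0] with n hn
      have : ⌊r * ((g n - f n : ℕ) : ℝ)⌋₊ ≤ g n - f n :=
        Nat.floor_le_of_le (mul_le_of_le_one_left (Nat.cast_nonneg _) h1)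
      simp only [F]
      omega
    have hlt : ∀ r s : ℝ, 0 ≤ r → r < s →
        (F r : Germ ((hyperfilter ℕ : Ultrafilter ℕ) : Filter ℕ) ℕ) < F s := by
      intro r s h0 hrs
      obtain ⟨k, hk⟩ := exists_nat_ge (1 / (s - r))
      have hk' : 1 ≤ (s - r) * k := by
        rwa [div_le_iff₀' (sub_pos.2 hrs)] at hk
      refine Germ.coe_lt.2 ?_
      filter_upwards [hd k] with n hn
      exact Nat.add_lt_add_left
        (floor_mul_lt_floor_mul h0 hk' hrs (by omega : k < g n - f n)) _
    refine Cardinal.mk_le_of_injective (f := fun r => ⟨(F r : Germ _ ℕ), hmem r⟩) ?_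
    intro r s hrs
    have hrs' := congrArg Subtype.val hrs
    rcases lt_trichotomy (r : ℝ) s with hl | he | hl
    · exact absurd hrs' (hlt r s r.2.1 hl).ne
    · exact Subtype.ext he
    · exact absurd hrs' (hlt s r s.2.1 hl).ne'
end

section
/- Let U be the hyperfilter on ℕ and let a, b be hypernatural germs (elements of Filter.Germ (U : Filter ℕ) ℕ) such that a + k < b for every standard k : ℕ. Then there exists a hypernatural germ c such that a + k < c and c + k < b for every standard k : ℕ. -/
open Filter

/-- The ℤ-chains of the hypernaturals are densely ordered: between any two
hypernaturals at infinite distance there is one at infinite distance from both. -/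
theorem exists_mid_of_infinite_distance
    (a b : Germ ((hyperfilter ℕ : Ultrafilter ℕ) : Filter ℕ) ℕ)
    (h : ∀ k : ℕ, a + (k : Germ ((hyperfilter ℕ : Ultrafilter ℕ) : Filter ℕ) ℕ) < b) :
    ∃ c : Germ ((hyperfilter ℕ : Ultrafilter ℕ) : Filter ℕ) ℕ,
      (∀ k : ℕ, a + (k : Germ ((hyperfilter ℕ : Ultrafilter ℕ) : Filter ℕ) ℕ) < c) ∧
      (∀ k : ℕ, c + (k : Germ ((hyperfilter ℕ : Ultrafilter ℕ) : Filter ℕ) ℕ) < b) := by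
  induction a using Germ.inductionOn with | _ f
  induction b using Germ.inductionOn with | _ g
  have h' : ∀ k : ℕ, ∀ᶠ n in (hyperfilter ℕ : Filter ℕ), f n + k < g n :=
    fun k => Germ.coe_lt.1 (h k)
  -- The witness is the midpoint germ; a gap of more than `2 * k + 2` between `f n` and `g n`
  -- leaves room for `k` on either side despite the rounding of the division.
  refine ⟨((fun n => (f n + g n) / 2 : ℕ → ℕ) : Germ (hyperfilter ℕ : Filter ℕ) ℕ),
    fun k => Germ.coe_lt.2 ?_, fun k => Germ.coe_lt.2 ?_⟩
  · filter_upwards [h' (2 * k + 2)] with n hn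
    change f n + k < (f n + g n) / 2
    omega
  · filter_upwards [h' (2 * k + 2)] with n hn
    change (f n + g n) / 2 + k < g n
    omega
end

section
/- Let Ω, x, y be hyperreals (elements of Mathlib's Hyperreal, ℝ*) such that x and y are positively infinite (Hyperreal.InfinitePos x and Hyperreal.InfinitePos y) and x * y ≤ Ω. Then both x / Ω and y / Ω are infinitesimal (Hyperreal.Infinitesimal). -/
/-!
Since `x * y ≤ Ω` with all terms positive, `x / Ω ≤ 1 / y`, and the inverse of a positively
infinite hyperreal lies below every positive real. The bound for `y / Ω` follows by symmetry.
-/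

/-- For real `δ > 0`, infinitude of `y` gives `1 < δ * y`, so `x < δ * (x * y) ≤ δ * Ω`. -/
theorem infinitesimal_div_left_of_mul_le {Ω x y : Hyperreal}
    (hx : x.InfinitePos) (hy : y.InfinitePos) (h : x * y ≤ Ω) :
    Hyperreal.Infinitesimal (x / Ω) := by
  intro δ hδ
  have hx0 : 0 < x := hx 0
  have hy0 : 0 < y := hy 0
  have hΩ : 0 < Ω := (mul_pos hx0 hy0).trans_le h
  have hδ' : (0 : Hyperreal) < (δ : Hyperreal) := Hyperreal.coe_pos.2 hδ
  have hyδ : ((δ : Hyperreal))⁻¹ < y := by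
    rw [← Hyperreal.coe_inv]
    exact hy δ⁻¹
  have hone : 1 < δ * y := (inv_lt_iff_one_lt_mul₀' hδ').1 hyδ
  have hlt : x / Ω < δ := by
    rw [div_lt_iff₀ hΩ]
    calc x = x * 1 := (mul_one x).symm
      _ < x * (δ * y) := mul_lt_mul_of_pos_left hone hx0
      _ = δ * (x * y) := by ring
      _ ≤ δ * Ω := mul_le_mul_of_nonneg_left h hδ'.le
  have hpos : 0 < x / Ω := div_pos hx0 hΩ
  rw [Hyperreal.coe_zero, zero_sub, zero_add]
  exact ⟨(neg_lt_zero.2 hδ').trans hpos, hlt⟩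

/-- If `x` and `y` are positively infinite hyperreals with `x * y ≤ Ω`, then both
`x / Ω` and `y / Ω` are infinitesimal. -/
theorem div_infinitesimal_of_mul_le
    (Ω x y : Hyperreal)
    (hx : x.InfinitePos) (hy : y.InfinitePos) (h : x * y ≤ Ω) :
    Hyperreal.Infinitesimal (x / Ω) ∧ Hyperreal.Infinitesimal (y / Ω) :=
  ⟨infinitesimal_div_left_of_mul_le hx hy h,
    infinitesimal_div_left_of_mul_le hy hx (mul_comm x y ▸ h)⟩
end

section
/- Let g : ℕ → ℕ be such that the hyperreal Ω := Hyperreal.ofSeq (fun n => (g n : ℝ)) is positively infinite (Hyperreal.InfinitePos Ω). Then for every real r with 0 ≤ r ≤ 1 there exists f : ℕ → ℕ with f n ≤ g n for all n, such that Hyperreal.ofSeq (fun n => (f n : ℝ)) / Ω − r is infinitesimal (Hyperreal.Infinitesimal). -/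
/-! The witness is `f n = ⌊r * g n⌋₊`. Since `Ω` is positively infinite, `g` tends to infinity
along the hyperfilter, hence `⌊r * g n⌋₊ / g n → r` along it, and convergence along the
hyperfilter is what having a given standard part means. -/

/-- The standard part of `x / Ω` maps the hypernatural interval `[0, Ω]` onto the
whole unit interval: for every real `r ∈ [0,1]` there is a hypernatural `f ≤ g`
with `st (f/Ω) = r`, i.e. `f/Ω - r` infinitesimal. -/
theorem standard_part_onto_unit_interval
    (g : ℕ → ℕ)
    (hΩ : Hyperreal.InfinitePos (Hyperreal.ofSeq fun n => (g n : ℝ)))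
    (r : ℝ) (hr0 : 0 ≤ r) (hr1 : r ≤ 1) :
    ∃ f : ℕ → ℕ, (∀ n, f n ≤ g n) ∧
      Hyperreal.Infinitesimal
        (Hyperreal.ofSeq (fun n => (f n : ℝ)) / Hyperreal.ofSeq (fun n => (g n : ℝ))
          - (r : Hyperreal)) := by
  have hg : Filter.Tendsto (fun n => (g n : ℝ)) (Filter.hyperfilter ℕ) Filter.atTop :=
    Filter.tendsto_atTop.2 fun b => Hyperreal.ofSeq_le_ofSeq.1 (hΩ b).le
  refine ⟨fun n => ⌊r * (g n : ℝ)⌋₊, fun n => ?_, ?_⟩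
  · exact Nat.floor_le_of_le (mul_le_of_le_one_left (Nat.cast_nonneg _) hr1)
  · -- Germ operations are pointwise, so the hyperreal is definitionally `ofSeq` of the
    -- sequence `⌊r * g n⌋₊ / g n - r`.
    change Hyperreal.IsSt
      (Hyperreal.ofSeq fun n => (⌊r * (g n : ℝ)⌋₊ : ℝ) / (g n : ℝ) - r) 0
    rw [Hyperreal.isSt_ofSeq_iff_tendsto]
    simpa using ((tendsto_nat_floor_mul_div_atTop hr0).comp hg).sub_const r
end

section
/- Let A : ℕ → Finset ℕ and let S be the set of hypernatural germs x ∈ Filter.Germ ((Filter.hyperfilter ℕ) : Filter ℕ) ℕ such that for some representative f : ℕ → ℕ of x the set {n : ℕ | f n ∈ A n} belongs to the hyperfilter on ℕ. Then either S is finite or S has cardinality equal to the continuum (Cardinal.continuum). -/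
/-!
The dichotomy is whether the cardinalities `#(A n)` are bounded by a standard `k` for almost all `n`.

If they are, list each `A n`; a germ in the internal set selects an index below `k` almost everywhere,
and an ultrafilter makes that index constant, so there are at most `k` germs
(`internalSubset_finite_of_bounded`).

If not, then `m n = log₂ #(A n)` exceeds every standard integer almost everywhere. Since
`2 ^ m n ≤ #(A n)`, the subsets of `{0, …, m n - 1}` inject into `A n`, and sending `X ⊆ ℕ` to the germ
of the codes of its truncations `X ∩ {0, …, m n - 1}` embeds the power set of `ℕ` into the internal
set (`continuum_le_mk_internalSubset`). The upper bound holds because there are only continuum many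
sequences of naturals.
-/

open Filter

/-- The internal subset of the ultrapower `ℕ^ℕ/U` represented by a sequence of
finite sets `A : ℕ → Finset ℕ`: the germs having a representative `f` with
`f n ∈ A n` almost everywhere. -/
def internalSubset (A : ℕ → Finset ℕ) :
    Set (Germ ((hyperfilter ℕ : Ultrafilter ℕ) : Filter ℕ) ℕ) :=
  {x | ∃ f : ℕ → ℕ,
    (↑f : Germ ((hyperfilter ℕ : Ultrafilter ℕ) : Filter ℕ) ℕ) = x ∧
    {n : ℕ | f n ∈ A n} ∈ hyperfilter ℕ}

theorem internalSubset_finite_of_bounded (A : ℕ → Finset ℕ) (k : ℕ)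
    (hk : ∀ᶠ n in (hyperfilter ℕ : Filter ℕ), (A n).card ≤ k) :
    (internalSubset A).Finite := by
  let e : Fin k → Germ ((hyperfilter ℕ : Ultrafilter ℕ) : Filter ℕ) ℕ :=
    fun i => ((fun n => (A n).toList.getD i 0 : ℕ → ℕ) : Germ _ ℕ)
  refine (Set.finite_range e).subset ?_
  rintro x ⟨f, rfl, hf⟩
  have h : ∀ᶠ n in (hyperfilter ℕ : Filter ℕ), ∃ i : Fin k, (A n).toList.getD i 0 = f n := by
    filter_upwards [hk, hf] with n hn hfn
    obtain ⟨i, hi, hif⟩ := List.mem_iff_getElem.1 (Finset.mem_toList.2 hfn)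
    refine ⟨⟨i, ?_⟩, ?_⟩
    · rw [Finset.length_toList] at hi
      omega
    · exact (List.getD_eq_getElem _ _ hi).trans hif
  obtain ⟨i, hi⟩ := Ultrafilter.eventually_exists_iff.1 h
  exact ⟨i, Germ.coe_eq.2 hi⟩

/-- A nonempty finite set `s` of naturals contains codes for all subsets of `{0, …, log₂ #s - 1}`;
here each `X ⊆ ℕ` is sent to the code of its truncation. -/
theorem exists_code (s : Finset ℕ) (hs : s.Nonempty) :
    ∃ G : Set ℕ → ℕ, (∀ X, G X ∈ s) ∧
      ∀ X Y, G X = G Y → ∀ i < Nat.log 2 s.card, (i ∈ X ↔ i ∈ Y) := by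
  classical
  have hcard : Fintype.card (Set (Fin (Nat.log 2 s.card))) ≤ Fintype.card s := by
    simpa using Nat.pow_log_le_self 2 (Finset.card_pos.2 hs).ne'
  obtain ⟨φ⟩ := Function.Embedding.nonempty_of_card_le hcard
  refine ⟨fun X => φ (Fin.val ⁻¹' X), fun X => (φ _).2, fun X Y h i hi => ?_⟩
  have h' := φ.injective (Subtype.ext h)
  exact Set.ext_iff.1 h' ⟨i, hi⟩

theorem continuum_le_mk_internalSubset (A : ℕ → Finset ℕ)
    (hA : ∀ k, ∀ᶠ n in (hyperfilter ℕ : Filter ℕ), k < (A n).card) :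
    Cardinal.continuum ≤ Cardinal.mk (internalSubset A) := by
  have hG : ∀ n, ∃ G : Set ℕ → ℕ, (A n).Nonempty → (∀ X, G X ∈ A n) ∧
      ∀ X Y, G X = G Y → ∀ i < Nat.log 2 (A n).card, (i ∈ X ↔ i ∈ Y) := by
    intro n
    by_cases hn : (A n).Nonempty
    · obtain ⟨G, hG⟩ := exists_code (A n) hn
      exact ⟨G, fun _ => hG⟩
    · exact ⟨fun _ => 0, fun h => absurd h hn⟩
  choose G hG using hG
  have hmem : ∀ X, ((fun n => G n X : ℕ → ℕ) : Germ ((hyperfilter ℕ : Ultrafilter ℕ) : Filter ℕ) ℕ)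
      ∈ internalSubset A := by
    refine fun X => ⟨_, rfl, ?_⟩
    filter_upwards [hA 0] with n hn
    exact (hG n (Finset.card_pos.1 hn)).1 X
  rw [← Cardinal.mk_set_nat]
  refine Cardinal.mk_le_of_injective (f := fun X => (⟨_, hmem X⟩ : internalSubset A)) ?_
  intro X Y h
  have h' := Germ.coe_eq.1 (congrArg Subtype.val h)
  ext i
  -- A single `n` where the two codes agree and `i < log₂ #(A n)` decides membership of `i`.
  obtain ⟨n, hn, hin⟩ := (h'.and (hA (2 ^ (i + 1)))).exists
  have hpos : 0 < (A n).card := (Nat.zero_le _).trans_lt hin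
  exact (hG n (Finset.card_pos.1 hpos)).2 X Y hn i (Nat.le_log_of_pow_le one_lt_two hin.le)

theorem mk_internalSubset_le_continuum (A : ℕ → Finset ℕ) :
    Cardinal.mk (internalSubset A) ≤ Cardinal.continuum := by
  refine (Cardinal.mk_set_le _).trans ?_
  refine (Cardinal.mk_le_of_surjective (f := fun f : ℕ → ℕ =>
    (f : Germ ((hyperfilter ℕ : Ultrafilter ℕ) : Filter ℕ) ℕ)) ?_).trans (by simp)
  exact fun x => x.inductionOn fun f => ⟨f, rfl⟩

/-- An internal subset of the hypernaturals is either finite or of cardinality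
continuum. -/
theorem internalSubset_finite_or_card_continuum (A : ℕ → Finset ℕ) :
    (internalSubset A).Finite ∨
      Cardinal.mk (internalSubset A) = Cardinal.continuum := by
  by_cases h : ∃ k, ∀ᶠ n in (hyperfilter ℕ : Filter ℕ), (A n).card ≤ k
  · obtain ⟨k, hk⟩ := h
    exact Or.inl (internalSubset_finite_of_bounded A k hk)
  · refine Or.inr ((mk_internalSubset_le_continuum A).antisymm
      (continuum_le_mk_internalSubset A fun k => ?_))
    simpa using Ultrafilter.eventually_not.2 fun hk => h ⟨k, hk⟩
end

section
/- Let g : ℕ → ℕ be such that the hyperreal Ω := Hyperreal.ofSeq (fun n => (g n : ℝ)) is positively infinite. Then for every e : ℕ → ℕ there exists h : ℕ → ℕ such that: (i) for every standard k : ℕ the set {n : ℕ | e n + k < h n} belongs to the hyperfilter on ℕ, and (ii) (Hyperreal.ofSeq (fun n => (h n : ℝ)) − Hyperreal.ofSeq (fun n => (e n : ℝ))) / Ω is infinitesimal (Hyperreal.Infinitesimal). -/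
/-!
Take `h n = e n + ⌊√(g n)⌋`. Since `g` exceeds every standard bound on a set of the hyperfilter,
so does `s = ⌊√g⌋`; hence `h` is infinitely far above `e`. On the other hand `s ^ 2 ≤ g`, so the
relative distance `s / g` is at most `1 / s`, which is infinitesimal.
-/

open Filter

/-- The equivalence class `[x]_∼` (elements at infinitesimal relative distance
with respect to `Ω`) is strictly bigger than the ℤ-chain: for every `e` there is
an `h` which is infinitely far above `e` but at infinitesimal distance from `e`
relative to `Ω`. -/
theorem exists_infinitely_far_infinitesimally_close
    (g : ℕ → ℕ)
    (hΩ : Hyperreal.InfinitePos (Hyperreal.ofSeq fun n => (g n : ℝ)))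
    (e : ℕ → ℕ) :
    ∃ h : ℕ → ℕ,
      (∀ k : ℕ, {n : ℕ | e n + k < h n} ∈ hyperfilter ℕ) ∧
      Hyperreal.Infinitesimal
        ((Hyperreal.ofSeq (fun n => (h n : ℝ)) - Hyperreal.ofSeq (fun n => (e n : ℝ)))
          / Hyperreal.ofSeq (fun n => (g n : ℝ))) := by
  have hsqrt (k : ℕ) : ∀ᶠ n in hyperfilter ℕ, k < Nat.sqrt (g n) := by
    have hk : ∀ᶠ n in hyperfilter ℕ, (((k + 1) * (k + 1) : ℕ) : ℝ) < (g n : ℝ) :=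
      Hyperreal.ofSeq_lt_ofSeq.1 (hΩ (((k + 1) * (k + 1) : ℕ) : ℝ))
    filter_upwards [hk] with n hn
    exact Nat.le_sqrt.2 (Nat.cast_lt.1 hn).le
  refine ⟨fun n => e n + Nat.sqrt (g n), fun k => ?_, fun δ hδ => ?_⟩
  · filter_upwards [hsqrt k] with n hn
    exact Nat.add_lt_add_left hn _
  · obtain ⟨k, hk⟩ := exists_nat_gt (1 / δ)
    -- The field operations on germs are computed termwise on representatives.
    have hquot : (Hyperreal.ofSeq (fun n => ((e n + Nat.sqrt (g n) : ℕ) : ℝ))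
          - Hyperreal.ofSeq (fun n => (e n : ℝ))) / Hyperreal.ofSeq (fun n => (g n : ℝ))
        = Hyperreal.ofSeq
            (fun n => (((e n + Nat.sqrt (g n) : ℕ) : ℝ) - (e n : ℝ)) / (g n : ℝ)) := rfl
    have hbound : ∀ᶠ n in hyperfilter ℕ,
        0 - δ < (((e n + Nat.sqrt (g n) : ℕ) : ℝ) - (e n : ℝ)) / (g n : ℝ) ∧
        (((e n + Nat.sqrt (g n) : ℕ) : ℝ) - (e n : ℝ)) / (g n : ℝ) < 0 + δ := by
      filter_upwards [hsqrt k] with n hn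
      have hs : (k : ℝ) < (Nat.sqrt (g n) : ℝ) := Nat.cast_lt.2 hn
      have hsq : (Nat.sqrt (g n) : ℝ) * Nat.sqrt (g n) ≤ g n := by
        exact_mod_cast Nat.sqrt_le (g n)
      have hspos : (0 : ℝ) < Nat.sqrt (g n) := lt_of_le_of_lt k.cast_nonneg hs
      have hgpos : (0 : ℝ) < g n := lt_of_lt_of_le (mul_pos hspos hspos) hsq
      have hone : 1 < (Nat.sqrt (g n) : ℝ) * δ := (div_lt_iff₀ hδ).1 (hk.trans hs)
      rw [Nat.cast_add, add_sub_cancel_left]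
      constructor
      · have := div_pos hspos hgpos
        linarith
      · rw [zero_add, div_lt_iff₀ hgpos]
        -- `s < s * (s * δ) ≤ g * δ`, because `1 < s * δ`.
        nlinarith [mul_lt_mul_of_pos_left hone hspos, mul_le_mul_of_nonneg_right hsq hδ.le]
    rw [hquot]
    exact ⟨Hyperreal.ofSeq_lt_ofSeq.2 (hbound.mono fun _ h => h.1),
      Hyperreal.ofSeq_lt_ofSeq.2 (hbound.mono fun _ h => h.2)⟩
end

section
/- The set of germs Filter.Germ ((Filter.hyperfilter ℕ) : Filter ℕ) ℕ and the set of germs Filter.Germ ((Filter.hyperfilter ℕ) : Filter ℕ) (Finset ℕ) both have cardinality equal to the continuum (Cardinal.continuum). -/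
/-!
Any ultrapower `α^ℕ/U` of a countably infinite `α` by the hyperfilter has cardinality `𝔠`.
The upper bound holds because germs are a quotient of `ℕ → α`, which has `ℵ₀ ^ ℵ₀ = 𝔠` elements.
For the lower bound, code finite sets of naturals by elements of `α` and send `A ⊆ ℕ` to the germ
of its truncations `n ↦ A ∩ {0, …, n - 1}`. If `A ≠ B`, the truncations differ for all large `n`,
so the germs differ because `U` contains every cofinite set; this injects `Set ℕ` into the
ultrapower. Both `ℕ` and `Finset ℕ` are countably infinite.
-/

open Filter

open Classical in
/-- Two sets of naturals whose initial segments agree along the hyperfilter are equal: each `k` lies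
below some index where the segments agree. -/
lemma eq_of_truncations_eventuallyEq {A B : Set ℕ}
    (h : ∀ᶠ n in (hyperfilter ℕ : Filter ℕ),
      (Finset.range n).filter (· ∈ A) = (Finset.range n).filter (· ∈ B)) : A = B := by
  ext k
  have hk : ∀ᶠ n in (hyperfilter ℕ : Filter ℕ), k < n :=
    Nat.hyperfilter_le_atTop (eventually_gt_atTop k)
  obtain ⟨n, hn, hkn⟩ := (h.and hk).exists
  have hmem := Finset.ext_iff.1 hn k
  simpa [hkn] using hmem

lemma mk_germ_hyperfilter_eq_continuum (α : Type) [Countable α] [Infinite α] :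
    Cardinal.mk (Germ (hyperfilter ℕ : Filter ℕ) α) = Cardinal.continuum := by
  classical
  apply le_antisymm
  · calc Cardinal.mk (Germ (hyperfilter ℕ : Filter ℕ) α)
        ≤ Cardinal.mk (ℕ → α) := Cardinal.mk_quotient_le
      _ = Cardinal.continuum := by
        rw [← Cardinal.power_def, Cardinal.mk_eq_aleph0 α, Cardinal.mk_nat,
          Cardinal.aleph0_power_aleph0]
  · obtain ⟨e⟩ : Nonempty (Finset ℕ ≃ α) := nonempty_equiv_of_countable
    rw [← Cardinal.mk_set_nat]
    let truncationGerm : Set ℕ → Germ (hyperfilter ℕ : Filter ℕ) α := fun A =>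
      ((fun n => e ((Finset.range n).filter (· ∈ A)) : ℕ → α) : Germ _ α)
    refine Cardinal.mk_le_of_injective (f := truncationGerm) fun A B hAB => ?_
    exact eq_of_truncations_eventuallyEq ((Germ.coe_eq.1 hAB).mono fun n hn => e.injective hn)

/-- The ultrapower `ℕ^ℕ/U` over the hyperfilter and its internal finite power
set both have cardinality continuum. -/
theorem germ_hypernat_card_continuum :
    Cardinal.mk (Germ ((hyperfilter ℕ : Ultrafilter ℕ) : Filter ℕ) ℕ)
        = Cardinal.continuum ∧
      Cardinal.mk (Germ ((hyperfilter ℕ : Ultrafilter ℕ) : Filter ℕ) (Finset ℕ))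
        = Cardinal.continuum :=
  ⟨mk_germ_hyperfilter_eq_continuum ℕ, mk_germ_hyperfilter_eq_continuum (Finset ℕ)⟩
end
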